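/- Large-degree concentration bound (analytic content of Theorem 4.2, part 2): Let U : ℤ^k → [0,∞) be even with U(0) = 0 and v := inf_{j∈ℤ^k∖{0}} U(j) > 0, fix A > 1/v, set β_{A,d} := A · log d / (d+1) and Q_β(j) := exp(−β U(j)), and assume ‖Q_{β_{A,d}}‖_{(d+1)/2, ℤ^k} < ∞ for some d ≥ 2. Then there exist a constant C > 0 and d₀ ≥ 2 such that for every d ≥ d₀ and every β ≥ β_{A,d}, the unique fixed point x of the operator T (formed from Q := Q_β) in the good-set ball satisfies ‖x‖_{d+1, ℤ^k∖{0}}^{d+1} ≤ C/d; equivalently, the associated normalized boundary law λ = x^d (extended by λ(0)=1) satisfies Σ_{j∈ℤ^k∖{0}} λ(j)^{(d+1)/d} ≤ C/d, which equals the Gibbs-measure ratio μ_i(σ_0 ≠ i)/μ_i(σ_0 = i) and tends to 0 as d → ∞. -/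

import Mathlib

/-!
Write `n = d + 1` and `a = ‖x‖_n`. The denominator of `T` is at least `1`, so Minkowski's inequality
and Young's inequality `‖Q * x^d‖_n ≤ ‖Q‖_{n/2} ‖x^d‖_{n/d}` give `a ≤ δ + γ a ^ d`. The contraction
condition makes the last term at most `a / (2 d)`, so `(1 - 1 / (2 d)) a ≤ δ`, and Bernoulli's
inequality yields `a ^ n ≤ 4 δ ^ n`.

It remains to see that `δ ^ n = O(1 / d)`. Let `D` be a degree for which the norm in the hypothesis
is finite, that is, `S = ∑ D ^ (-A U(j) / 2) < ∞`. For `d ≥ D` and `j ≠ 0` one has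
`A U(j) ≥ A v ≥ 1`, so `Q(j) ^ n ≤ d ^ (-A U(j)) ≤ (D / d) * D ^ (-A U(j))`, and summing gives
`δ ^ n ≤ D S / d`.
-/

open scoped BigOperators
open Filter Topology

noncomputable section

/-- The integer lattice `ℤ^k`. -/
abbrev ZkL (k : ℕ) := Fin k → ℤ

/-- The punctured integer lattice `ℤ^k ∖ {0}`, as a subtype. -/
abbrev ZkP (k : ℕ) := {j : ZkL k // j ≠ 0}

/-- The `p`-norm `‖x‖_{p, ℤ^k}` of a function on all of `ℤ^k`. -/
noncomputable def normFull (k : ℕ) (p : ℝ) (x : ZkL k → ℝ) : ℝ :=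
  (∑' j : ZkL k, |x j| ^ p) ^ (1 / p)

/-- The `p`-norm `‖x‖_{p, ℤ^k ∖ {0}}` of a function on `ℤ^k`, restricted to nonzero sites. -/
noncomputable def normPunct (k : ℕ) (p : ℝ) (x : ZkL k → ℝ) : ℝ :=
  (∑' j : ZkP k, |x j.1| ^ p) ^ (1 / p)

/-- The `p`-norm of a function defined on `ℤ^k ∖ {0}`. -/
noncomputable def norm0 (k : ℕ) (p : ℝ) (x : ZkP k → ℝ) : ℝ :=
  (∑' j : ZkP k, |x j| ^ p) ^ (1 / p)

/-- `γ := ‖Q‖_{(d+1)/2, ℤ^k}`. -/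
noncomputable def gam (k d : ℕ) (Q : ZkL k → ℝ) : ℝ := normFull k (((d : ℝ) + 1) / 2) Q

/-- `δ := ‖Q‖_{d+1, ℤ^k ∖ {0}}`. -/
noncomputable def del (k d : ℕ) (Q : ZkL k → ℝ) : ℝ := normPunct k ((d : ℝ) + 1) Q

/-- Membership in `D`: an element of `ℓ^{d+1}(ℤ^k ∖ {0})` with nonnegative entries. -/
def memD (k d : ℕ) (x : ZkP k → ℝ) : Prop :=
  Summable (fun j : ZkP k => |x j| ^ ((d : ℝ) + 1)) ∧ ∀ j : ZkP k, 0 ≤ x j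

/-- The operator `T`:
`T(x)(i) = (Q(i) + Σ_{j≠0} Q(i−j) x(j)^d) / (1 + Σ_{j≠0} Q(j) x(j)^d)`. -/
noncomputable def opT (k d : ℕ) (Q : ZkL k → ℝ) (x : ZkP k → ℝ) (i : ZkL k) : ℝ :=
  (Q i + ∑' j : ZkP k, Q (i - j.1) * x j ^ d) /
  (1 + ∑' j : ZkP k, Q j.1 * x j ^ d)

/-- The good set `G_d`. -/
def goodSet (d : ℕ) : Set (ℝ × ℝ) :=
  {gd | 1 < gd.1 ∧ 0 < gd.2 ∧ ∃ ε > 0,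
    gd.2 + gd.1 * ε ^ d ≤ ε ∧
    2 * d * gd.1 * ε ^ (d - 1) + 2 * d * gd.2 * ε ^ d < 1}

open scoped ENNReal

section ENNRealSums

variable {ι κ : Type*} {p : ℝ}

/-- The `ℓ^p` norm of an `ℝ≥0∞`-valued family. Inequalities between sums are proved for it, since
in `ℝ≥0∞` no summability has to be tracked, and then transferred to the real norm `ellNorm`. -/
def ellENorm (p : ℝ) (f : ι → ℝ≥0∞) : ℝ≥0∞ := (∑' j, f j ^ p) ^ (1 / p)

lemma ellENorm_rpow (hp : p ≠ 0) (f : ι → ℝ≥0∞) : ellENorm p f ^ p = ∑' j, f j ^ p := by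
  rw [ellENorm, ← ENNReal.rpow_mul, one_div_mul_cancel hp, ENNReal.rpow_one]

lemma ellENorm_le_iff (hp : 0 < p) {f : ι → ℝ≥0∞} {M : ℝ≥0∞} :
    ellENorm p f ≤ M ↔ ∑' j, f j ^ p ≤ M ^ p := by
  rw [← ellENorm_rpow hp.ne', ENNReal.rpow_le_rpow_iff hp]

lemma ellENorm_mono (hp : 0 ≤ p) {f g : ι → ℝ≥0∞} (h : ∀ j, f j ≤ g j) :
    ellENorm p f ≤ ellENorm p g := by
  unfold ellENorm
  gcongr with j
  exact h j

lemma ellENorm_comp_le_of_injective (hp : 0 ≤ p) {e : ι → κ} (he : e.Injective)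
    (f : κ → ℝ≥0∞) : ellENorm p (fun i => f (e i)) ≤ ellENorm p f :=
  ENNReal.rpow_le_rpow (ENNReal.tsum_comp_le_tsum_of_injective he fun j => f j ^ p)
    (one_div_nonneg.2 hp)

lemma ellENorm_pow {m : ℕ} (hm : m ≠ 0) (f : ι → ℝ≥0∞) :
    ellENorm (p / m) (fun j => f j ^ m) = ellENorm p f ^ m := by
  have hm' : (m : ℝ) ≠ 0 := Nat.cast_ne_zero.2 hm
  simp only [ellENorm, ← ENNReal.rpow_natCast, ← ENNReal.rpow_mul, mul_div_cancel₀ p hm',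
    one_div_div, one_div_mul_eq_div]

lemma ellENorm_add_le (hp : 1 ≤ p) (f g : ι → ℝ≥0∞) :
    ellENorm p (fun j => f j + g j) ≤ ellENorm p f + ellENorm p g := by
  let _ : MeasurableSpace ι := ⊤
  simpa only [ellENorm, MeasureTheory.lintegral_count, Pi.add_apply] using
    ENNReal.lintegral_Lp_add_le (μ := MeasureTheory.Measure.count) (f := f) (g := g)
      measurable_from_top.aemeasurable measurable_from_top.aemeasurable hp

lemma tsum_prod_rpow_le_prod_tsum_rpow (s : Finset κ) (f : κ → ι → ℝ≥0∞) {w : κ → ℝ}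
    (hw : ∑ m ∈ s, w m = 1) (hw0 : ∀ m ∈ s, 0 ≤ w m) :
    ∑' j, ∏ m ∈ s, f m j ^ w m ≤ ∏ m ∈ s, (∑' j, f m j) ^ w m := by
  let _ : MeasurableSpace ι := ⊤
  simpa only [MeasureTheory.lintegral_count] using
    ENNReal.lintegral_prod_norm_pow_le (α := ι) (μ := MeasureTheory.Measure.count) s
      (fun _ _ => measurable_from_top.aemeasurable) hw hw0

end ENNRealSums

section Young

variable {ι κ : Type*} {p q r : ℝ}

lemma le_of_inv_add_inv_eq_one_add_inv (hp : 0 < p) (hq : 1 ≤ q) (hr : 0 < r)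
    (h : p⁻¹ + q⁻¹ = 1 + r⁻¹) : p ≤ r :=
  (inv_le_inv₀ hr hp).1 (by linarith [inv_le_one_of_one_le₀ hq])

/-- Three-fold Hölder for the splitting
`f g = (f ^ p g ^ q) ^ (1 / r) * (f ^ p) ^ (1 / p - 1 / r) * (g ^ q) ^ (1 / q - 1 / r)`. -/
lemma tsum_mul_rpow_le (hp : 1 ≤ p) (hq : 1 ≤ q) (hr : 0 < r) (h : p⁻¹ + q⁻¹ = 1 + r⁻¹)
    (f g : ι → ℝ≥0∞) :
    (∑' j, f j * g j) ^ r ≤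
      (∑' j, f j ^ p * g j ^ q) * ellENorm p f ^ (r - p) * ellENorm q g ^ (r - q) := by
  have hp0 : 0 < p := by linarith
  have hq0 : 0 < q := by linarith
  have hpr : 0 ≤ p⁻¹ - r⁻¹ := by linarith [inv_le_one_of_one_le₀ hq]
  have hqr : 0 ≤ q⁻¹ - r⁻¹ := by linarith [inv_le_one_of_one_le₀ hp]
  have hr0 : 0 ≤ r⁻¹ := inv_nonneg.2 hr.le
  have holder := tsum_prod_rpow_le_prod_tsum_rpow Finset.univ
    ![fun j => f j ^ p * g j ^ q, fun j => f j ^ p, fun j => g j ^ q]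
    (w := ![r⁻¹, p⁻¹ - r⁻¹, q⁻¹ - r⁻¹])
    (by simp only [Fin.sum_univ_three, Matrix.cons_val]; linarith)
    (by simp only [Fin.forall_fin_succ, Matrix.cons_val_zero, Matrix.cons_val_succ]; simp_all)
  have split_rpow : ∀ s : ℝ, 0 < s → 0 ≤ s⁻¹ - r⁻¹ → ∀ a : ℝ≥0∞,
      (a ^ s) ^ r⁻¹ * (a ^ s) ^ (s⁻¹ - r⁻¹) = a := fun s hs hsr a => by
    rw [← ENNReal.rpow_add_of_nonneg _ _ hr0 hsr, add_sub_cancel, ENNReal.rpow_rpow_inv hs.ne']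
  have split_mul : ∀ j, (f j ^ p * g j ^ q) ^ r⁻¹ * (f j ^ p) ^ (p⁻¹ - r⁻¹) *
      (g j ^ q) ^ (q⁻¹ - r⁻¹) = f j * g j := fun j => by
    rw [ENNReal.mul_rpow_of_nonneg _ _ hr0, mul_right_comm ((f j ^ p) ^ r⁻¹),
      split_rpow p hp0 hpr, mul_assoc, split_rpow q hq0 hqr]
  simp only [Fin.prod_univ_three, Matrix.cons_val, split_mul] at holder
  have rpow_exponent : ∀ s : ℝ, 0 < s → ∀ a : ℝ≥0∞,
      (a ^ (s⁻¹ - r⁻¹)) ^ r = (a ^ (1 / s)) ^ (r - s) := fun s hs a => by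
    rw [← ENNReal.rpow_mul, ← ENNReal.rpow_mul]
    congr 1
    field_simp
  refine (ENNReal.rpow_le_rpow holder hr.le).trans_eq ?_
  rw [ENNReal.mul_rpow_of_nonneg _ _ hr.le, ENNReal.mul_rpow_of_nonneg _ _ hr.le,
    ENNReal.rpow_inv_rpow hr.ne', rpow_exponent p hp0, rpow_exponent q hq0, ellENorm, ellENorm]

lemma ellENorm_tsum_kernel_mul_le (hp : 1 ≤ p) (hq : 1 ≤ q) (hr : 0 < r) (h : p⁻¹ + q⁻¹ = 1 + r⁻¹)
    {K : ι → κ → ℝ≥0∞} {M : ℝ≥0∞} (hrow : ∀ i, ellENorm p (K i) ≤ M)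
    (hcol : ∀ j, ellENorm p (fun i => K i j) ≤ M) (g : κ → ℝ≥0∞) :
    ellENorm r (fun i => ∑' j, K i j * g j) ≤ M * ellENorm q g := by
  have hp0 : 0 < p := by linarith
  have hq0 : 0 < q := by linarith
  have hpr : p ≤ r := le_of_inv_add_inv_eq_one_add_inv hp0 hq hr h
  have hqr : q ≤ r := le_of_inv_add_inv_eq_one_add_inv hq0 hp hr (by rwa [add_comm])
  set N := ellENorm q g
  rw [ellENorm_le_iff hr]
  calc ∑' i, (∑' j, K i j * g j) ^ r
      ≤ ∑' i, (∑' j, K i j ^ p * g j ^ q) * M ^ (r - p) * N ^ (r - q) := by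
        gcongr with i
        refine (tsum_mul_rpow_le hp hq hr h (K i) g).trans ?_
        gcongr
        exact hrow i
    _ = (∑' j, (∑' i, K i j ^ p) * g j ^ q) * M ^ (r - p) * N ^ (r - q) := by
        simp only [ENNReal.tsum_mul_right]
        rw [ENNReal.tsum_comm]
        simp only [ENNReal.tsum_mul_right]
    _ ≤ (∑' j, M ^ p * g j ^ q) * M ^ (r - p) * N ^ (r - q) := by
        gcongr with j
        exact (ellENorm_le_iff hp0).1 (hcol j)
    _ = (M ^ p * M ^ (r - p)) * (N ^ q * N ^ (r - q)) := by
        rw [ENNReal.tsum_mul_left, ← ellENorm_rpow hq0.ne']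
        ring
    _ = (M * N) ^ r := by
        rw [← ENNReal.rpow_add_of_nonneg _ _ hp0.le (sub_nonneg.2 hpr),
          ← ENNReal.rpow_add_of_nonneg _ _ hq0.le (sub_nonneg.2 hqr), add_sub_cancel,
          add_sub_cancel, ENNReal.mul_rpow_of_nonneg _ _ hr.le]

lemma ellENorm_le_add_mul_pow {d : ℕ} (hd : 1 ≤ d) {K : ι → ι → ℝ≥0∞} {b y : ι → ℝ≥0∞}
    {M : ℝ≥0∞} (hrow : ∀ i, ellENorm (((d : ℝ) + 1) / 2) (K i) ≤ M)
    (hcol : ∀ j, ellENorm (((d : ℝ) + 1) / 2) (fun i => K i j) ≤ M)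
    (hy : ∀ i, y i ≤ b i + ∑' j, K i j * y j ^ d) :
    ellENorm ((d : ℝ) + 1) y ≤ ellENorm ((d : ℝ) + 1) b + M * ellENorm ((d : ℝ) + 1) y ^ d := by
  have hd' : (1 : ℝ) ≤ d := by exact_mod_cast hd
  have young := ellENorm_tsum_kernel_mul_le (p := ((d : ℝ) + 1) / 2) (q := ((d : ℝ) + 1) / d)
    (r := (d : ℝ) + 1) (by linarith) ((one_le_div (by linarith)).2 (by linarith)) (by linarith)
    (by field_simp; ring) hrow hcol (fun j => y j ^ d)
  rw [ellENorm_pow (by omega)] at young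
  calc ellENorm ((d : ℝ) + 1) y
      ≤ ellENorm ((d : ℝ) + 1) (fun i => b i + ∑' j, K i j * y j ^ d) :=
        ellENorm_mono (by linarith) hy
    _ ≤ _ := ellENorm_add_le (by linarith) _ _
    _ ≤ _ := by gcongr

end Young

section RealNorm

variable {ι : Type*}

/-- The real `ℓ^p` norm `(∑ |f j| ^ p) ^ (1 / p)` over an arbitrary index type; `normFull`,
`normPunct` and `norm0` are its instances for `ℤ^k` and `ℤ^k ∖ {0}`. As for them, the value is the
junk value of a divergent sum when `f` is not `p`-summable. -/
def ellNorm (p : ℝ) (f : ι → ℝ) : ℝ := (∑' j, |f j| ^ p) ^ (1 / p)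

lemma ellNorm_nonneg (p : ℝ) (f : ι → ℝ) : 0 ≤ ellNorm p f :=
  Real.rpow_nonneg (tsum_nonneg fun _ => by positivity) _

lemma ellNorm_pow_succ (d : ℕ) (f : ι → ℝ) :
    ellNorm ((d : ℝ) + 1) f ^ (d + 1) = ∑' j, |f j| ^ ((d : ℝ) + 1) := by
  have := Real.rpow_inv_natCast_pow
    (tsum_nonneg fun j => by positivity : 0 ≤ ∑' j, |f j| ^ ((d : ℝ) + 1)) d.succ_ne_zero
  rwa [Nat.cast_succ, ← one_div] at this

lemma ellENorm_enorm {p : ℝ} (hp : 0 < p) {f : ι → ℝ} (hf : Summable fun j => |f j| ^ p) :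
    ellENorm p (fun j => ‖f j‖ₑ) = ENNReal.ofReal (ellNorm p f) := by
  have hnn : ∀ j, 0 ≤ |f j| ^ p := fun j => by positivity
  rw [ellENorm, ellNorm, ← ENNReal.ofReal_rpow_of_nonneg (tsum_nonneg hnn) (by positivity),
    ENNReal.ofReal_tsum_of_nonneg hnn hf]
  simp only [Real.enorm_eq_ofReal_abs, ENNReal.ofReal_rpow_of_nonneg (abs_nonneg _) hp.le]

end RealNorm

section BoundaryOp

variable {G : Type*} [AddGroup G]

/-- The operator `T` with an additive group `G` in place of `ℤ^k`; `opT k` is the case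
`G = ℤ^k`. -/
def boundaryOp (d : ℕ) (Q : G → ℝ) (x : {j : G // j ≠ 0} → ℝ) (i : G) : ℝ :=
  (Q i + ∑' j : {j : G // j ≠ 0}, Q (i - j.1) * x j ^ d) /
  (1 + ∑' j : {j : G // j ≠ 0}, Q j.1 * x j ^ d)

variable {d : ℕ} {Q : G → ℝ} {x : {j : G // j ≠ 0} → ℝ}

lemma boundaryOp_le_add_tsum (hQ : ∀ j, 0 ≤ Q j) (hx : ∀ j, 0 ≤ x j) (i : G) :
    boundaryOp d Q x i ≤ Q i + ∑' j : {j : G // j ≠ 0}, Q (i - j.1) * x j ^ d := by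
  have hsum : ∀ e : {j : G // j ≠ 0} → G, 0 ≤ ∑' j, Q (e j) * x j ^ d := fun e =>
    tsum_nonneg fun j => mul_nonneg (hQ _) (pow_nonneg (hx j) d)
  exact div_le_self (add_nonneg (hQ i) (hsum _)) (le_add_of_nonneg_right (hsum _))

lemma ellNorm_le_of_le_boundaryOp (hd : 1 ≤ d) (hQ : ∀ j, 0 ≤ Q j)
    (hγ : Summable fun j => |Q j| ^ (((d : ℝ) + 1) / 2))
    (hδ : Summable fun j : {j : G // j ≠ 0} => |Q j| ^ ((d : ℝ) + 1))
    (hxs : Summable fun j => |x j| ^ ((d : ℝ) + 1)) (hx0 : ∀ j, 0 ≤ x j)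
    (hx : ∀ i, x i ≤ boundaryOp d Q x i) :
    ellNorm ((d : ℝ) + 1) x ≤ ellNorm ((d : ℝ) + 1) (fun j : {j : G // j ≠ 0} => Q j) +
      ellNorm (((d : ℝ) + 1) / 2) Q * ellNorm ((d : ℝ) + 1) x ^ d := by
  have hxe : ∀ i : {j : G // j ≠ 0}, ‖x i‖ₑ ≤
      ‖Q i‖ₑ + ∑' j : {j : G // j ≠ 0}, ‖Q (i.1 - j.1)‖ₑ * ‖x j‖ₑ ^ d := fun i => by
    calc ‖x i‖ₑ ≤ ‖Q i + ∑' j : {j : G // j ≠ 0}, Q (i.1 - j.1) * x j ^ d‖ₑ := by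
          rw [enorm_le_iff_norm_le]
          exact abs_le_abs_of_nonneg (hx0 i) ((hx i).trans (boundaryOp_le_add_tsum hQ hx0 i))
      _ ≤ _ := enorm_add_le _ _
      _ ≤ ‖Q i‖ₑ + ∑' j : {j : G // j ≠ 0}, ‖Q (i.1 - j.1) * x j ^ d‖ₑ := by
          gcongr
          exact enorm_tsum_le_tsum_enorm
      _ = _ := by simp only [enorm_mul, enorm_pow]
  have bound := ellENorm_le_add_mul_pow hd (K := fun i j : {j : G // j ≠ 0} => ‖Q (i.1 - j.1)‖ₑ)
    (fun i => ellENorm_comp_le_of_injective (by positivity)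
      (fun _ _ h => Subtype.ext (sub_right_injective h)) fun j => ‖Q j‖ₑ)
    (fun j => ellENorm_comp_le_of_injective (by positivity)
      (fun _ _ h => Subtype.ext (sub_left_injective h)) fun j => ‖Q j‖ₑ) hxe
  have hδ0 := ellNorm_nonneg ((d : ℝ) + 1) fun j : {j : G // j ≠ 0} => Q j
  have hγ0 := ellNorm_nonneg (((d : ℝ) + 1) / 2) Q
  have hxn := ellNorm_nonneg ((d : ℝ) + 1) x
  rwa [ellENorm_enorm (by positivity) hxs, ellENorm_enorm (by positivity) hδ,
    ellENorm_enorm (by positivity) hγ, ← ENNReal.ofReal_pow hxn, ← ENNReal.ofReal_mul hγ0,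
    ← ENNReal.ofReal_add hδ0 (by positivity), ENNReal.ofReal_le_ofReal_iff (by positivity)]
    at bound

end BoundaryOp

section Absorption

variable {d : ℕ} {a γ δ ε : ℝ}

lemma mul_pow_le_one_of_contraction (ha : 0 ≤ a) (haε : a ≤ ε) (hγ : 0 ≤ γ) (hδ : 0 ≤ δ)
    (h : 2 * d * γ * ε ^ (d - 1) + 2 * d * δ * ε ^ d < 1) : 2 * d * γ * a ^ (d - 1) ≤ 1 := by
  have hε : 0 ≤ ε := ha.trans haε
  have hγa : 2 * d * γ * a ^ (d - 1) ≤ 2 * d * γ * ε ^ (d - 1) := by gcongr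
  have hδε : 0 ≤ 2 * d * δ * ε ^ d := by positivity
  linarith

lemma one_fourth_le_one_sub_pow (hd : 2 ≤ d) : 1 / 4 ≤ (1 - 1 / (2 * d) : ℝ) ^ (d + 1) := by
  have hd' : (2 : ℝ) ≤ d := by exact_mod_cast hd
  have ht : 1 / (2 * d : ℝ) ≤ 1 / 4 := one_div_le_one_div_of_le (by norm_num) (by linarith)
  calc (1 / 4 : ℝ) ≤ 1 / 2 - 1 / (2 * d) := by linarith
    _ = 1 + ((d + 1 : ℕ) : ℝ) * -(1 / (2 * d)) := by push_cast; field_simp; ring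
    _ ≤ (1 + -(1 / (2 * d))) ^ (d + 1) := one_add_mul_le_pow (by linarith) _
    _ = _ := by rw [← sub_eq_add_neg]

lemma pow_succ_le_four_mul_pow_succ (hd : 2 ≤ d) (ha : 0 ≤ a) (h : a ≤ δ + γ * a ^ d)
    (hγ : 2 * d * γ * a ^ (d - 1) ≤ 1) : a ^ (d + 1) ≤ 4 * δ ^ (d + 1) := by
  have hd' : (2 : ℝ) ≤ d := by exact_mod_cast hd
  have hnonlin : γ * a ^ d ≤ a / (2 * d) := by
    rw [le_div_iff₀ (by linarith), ← mul_pow_sub_one (by omega : d ≠ 0) a]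
    calc γ * (a * a ^ (d - 1)) * (2 * d) = 2 * d * γ * a ^ (d - 1) * a := by ring
      _ ≤ a := mul_le_of_le_one_left ha hγ
  have hlin : (1 - 1 / (2 * d)) * a ≤ δ := by
    rw [one_sub_mul, one_div_mul_eq_div]
    linarith
  have ht : 1 / (2 * d : ℝ) ≤ 1 := (div_le_one (by linarith)).2 (by linarith)
  calc a ^ (d + 1) = 4 * (1 / 4 * a ^ (d + 1)) := by ring
    _ ≤ 4 * ((1 - 1 / (2 * d)) ^ (d + 1) * a ^ (d + 1)) := by
        gcongr
        exact one_fourth_le_one_sub_pow hd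
    _ = 4 * ((1 - 1 / (2 * d)) * a) ^ (d + 1) := by rw [mul_pow]
    _ ≤ 4 * δ ^ (d + 1) := by
        gcongr

end Absorption

section GibbsWeight

variable {ι : Type*} {U : ι → ℝ} {A β b D : ℝ}

/-- The Boltzmann factor `Q_β(j) = exp (-β U(j))` of the potential `U` at inverse temperature
`β`. -/
def gibbsWeight (U : ι → ℝ) (β : ℝ) (j : ι) : ℝ := Real.exp (-β * U j)

lemma gibbsWeight_pos (U : ι → ℝ) (β : ℝ) (j : ι) : 0 < gibbsWeight U β j := Real.exp_pos _

lemma gibbsWeight_rpow (U : ι → ℝ) (β p : ℝ) (j : ι) :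
    gibbsWeight U β j ^ p = gibbsWeight U (β * p) j := by
  rw [gibbsWeight, gibbsWeight, ← Real.exp_mul]
  ring_nf

lemma gibbsWeight_anti {j : ι} (hU : 0 ≤ U j) (h : b ≤ β) :
    gibbsWeight U β j ≤ gibbsWeight U b j := by
  unfold gibbsWeight
  gcongr

lemma gibbsWeight_mul_log_le {d : ℝ} {j : ι} (hD : 0 < D) (hDd : D ≤ d) (hAU : 1 ≤ A * U j) :
    gibbsWeight U (A * Real.log d) j ≤ D / d * gibbsWeight U (A * Real.log D) j := by
  have hd : 0 < d := hD.trans_le hDd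
  have hlog : Real.log D ≤ Real.log d := Real.log_le_log hD hDd
  have hratio : D / d = Real.exp (Real.log D - Real.log d) := by
    rw [Real.exp_sub, Real.exp_log hD, Real.exp_log hd]
  have hgap : Real.log d - Real.log D ≤ A * U j * (Real.log d - Real.log D) :=
    le_mul_of_one_le_left (sub_nonneg.2 hlog) hAU
  rw [hratio, gibbsWeight, gibbsWeight, ← Real.exp_add, Real.exp_le_exp]
  linarith

lemma summable_abs_gibbsWeight_rpow {p : ℝ} (hU : ∀ j, 0 ≤ U j) (hb : b ≤ β * p)
    (hs : Summable (gibbsWeight U b)) : Summable fun j => |gibbsWeight U β j| ^ p := by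
  simp only [abs_of_pos (gibbsWeight_pos U β _), gibbsWeight_rpow]
  exact hs.of_nonneg_of_le (fun j => (gibbsWeight_pos U _ j).le) fun j => gibbsWeight_anti (hU j) hb

lemma ellNorm_gibbsWeight_pow_le {d : ℕ} (hU : ∀ j, 0 ≤ U j) (hA : 0 ≤ A)
    (hAU : ∀ j, 1 ≤ A * U j) (hD : 1 ≤ D) (hDd : D ≤ d) (hβ : A * Real.log d ≤ β * (d + 1))
    (hs : Summable (gibbsWeight U (A * Real.log D / 2))) :
    ellNorm ((d : ℝ) + 1) (gibbsWeight U β) ^ (d + 1) ≤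
      D / d * ∑' j, gibbsWeight U (A * Real.log D / 2) j := by
  have hlogD : 0 ≤ A * Real.log D := mul_nonneg hA (Real.log_nonneg hD)
  have hterm : ∀ j, |gibbsWeight U β j| ^ ((d : ℝ) + 1) ≤
      D / d * gibbsWeight U (A * Real.log D / 2) j := fun j => by
    rw [abs_of_pos (gibbsWeight_pos U β j), gibbsWeight_rpow]
    calc gibbsWeight U (β * (d + 1)) j ≤ gibbsWeight U (A * Real.log d) j :=
          gibbsWeight_anti (hU j) hβ
      _ ≤ D / d * gibbsWeight U (A * Real.log D) j :=
          gibbsWeight_mul_log_le (by linarith) hDd (hAU j)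
      _ ≤ D / d * gibbsWeight U (A * Real.log D / 2) j := by
          gcongr
          exact gibbsWeight_anti (hU j) (half_le_self hlogD)
  rw [ellNorm_pow_succ, ← tsum_mul_left]
  exact Summable.tsum_le_tsum hterm
    ((hs.mul_left _).of_nonneg_of_le (fun j => by positivity) hterm) (hs.mul_left _)

end GibbsWeight

theorem stmt19_general {G : Type*} [AddGroup G] (U : G → ℝ) (hU : ∀ j, 0 ≤ U j) (v : ℝ)
    (hv : 0 < v) (hvU : ∀ j ≠ 0, v ≤ U j) (A : ℝ) (hA : 1 / v ≤ A)
    (hfin : ∃ d : ℕ, 2 ≤ d ∧ Summable fun j =>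
      gibbsWeight U (A * Real.log d / ((d : ℝ) + 1)) j ^ (((d : ℝ) + 1) / 2)) :
    ∃ C : ℝ, 0 < C ∧ ∃ d₀ : ℕ, 2 ≤ d₀ ∧ ∀ d : ℕ, d₀ ≤ d →
      ∀ β : ℝ, A * Real.log d / ((d : ℝ) + 1) ≤ β →
        ∀ x : {j : G // j ≠ 0} → ℝ, Summable (fun j => |x j| ^ ((d : ℝ) + 1)) →
          (∀ j, 0 ≤ x j) → (∀ i, x i ≤ boundaryOp d (gibbsWeight U β) x i) →
          2 * d * ellNorm (((d : ℝ) + 1) / 2) (gibbsWeight U β) *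
            ellNorm ((d : ℝ) + 1) x ^ (d - 1) ≤ 1 →
          ellNorm ((d : ℝ) + 1) x ^ (d + 1) ≤ C / d := by
  obtain ⟨D, hD, hs⟩ := hfin
  have hA0 : 0 < A := (one_div_pos.2 hv).trans_le hA
  have hAU : ∀ j : {j : G // j ≠ 0}, 1 ≤ A * U j := fun j =>
    ((div_le_iff₀ hv).1 hA).trans (by gcongr; exact hvU j j.2)
  have hD1 : (1 : ℝ) ≤ D := by exact_mod_cast (by omega : 1 ≤ D)
  replace hs : Summable (gibbsWeight U (A * Real.log D / 2)) := by
    refine hs.congr fun j => ?_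
    rw [gibbsWeight_rpow]
    congr 1
    field_simp
  have hs' := hs.subtype {j | j ≠ 0}
  set S := ∑' j, gibbsWeight U (A * Real.log D / 2) j
  have hS : 0 < S := hs.tsum_pos (fun j => (gibbsWeight_pos U _ j).le) 0 (gibbsWeight_pos U _ 0)
  refine ⟨4 * (D * S), by positivity, D, hD, fun d hDd β hβ x hxs hx0 hx hγ => ?_⟩
  have hd : 2 ≤ d := hD.trans hDd
  have hDd' : (D : ℝ) ≤ d := by exact_mod_cast hDd
  replace hβ : A * Real.log d ≤ β * (d + 1) := (div_le_iff₀ (by positivity)).1 hβ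
  have hlog : A * Real.log D ≤ A * Real.log d := by gcongr
  have hlogD : 0 ≤ A * Real.log D := mul_nonneg hA0.le (Real.log_nonneg hD1)
  have apriori := ellNorm_le_of_le_boundaryOp (by omega) (fun j => (gibbsWeight_pos U β j).le)
    (summable_abs_gibbsWeight_rpow hU (by linarith) hs)
    (summable_abs_gibbsWeight_rpow (fun j => hU j) (by linarith) hs') hxs hx0 hx
  calc ellNorm ((d : ℝ) + 1) x ^ (d + 1)
      ≤ 4 * ellNorm ((d : ℝ) + 1) (fun j : {j : G // j ≠ 0} => gibbsWeight U β j) ^ (d + 1) :=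
        pow_succ_le_four_mul_pow_succ hd (ellNorm_nonneg _ _) apriori hγ
    _ ≤ 4 * (D / d * ∑' j : {j : G // j ≠ 0}, gibbsWeight U (A * Real.log D / 2) j) := by
        gcongr
        exact ellNorm_gibbsWeight_pow_le (fun j => hU j) hA0.le hAU hD1 hDd' hβ hs'
    _ ≤ 4 * (D / d * S) := by
        gcongr
        exact hs.tsum_subtype_le _ _ fun j => (gibbsWeight_pos U _ j).le
    _ = 4 * (D * S) / d := by ring

/-- analytic content of Theorem 4.2, part 2: large-degree concentration
bound. Under the hypotheses of Theorem 4.2 there are `C > 0` and `d₀ ≥ 2` such that for all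
`d ≥ d₀`, all `β ≥ β_{A,d}`, and every good-set witness `ε` for `Q := Q_β`, the unique
fixed point `x` of `T` in the `ε`-ball satisfies `‖x‖_{d+1,ℤ^k∖{0}}^{d+1} ≤ C/d`
(this quantity equals the Gibbs ratio `μ_i(σ_0 ≠ i)/μ_i(σ_0 = i)` and tends to `0`). -/
theorem stmt19 (k : ℕ) (hk : 1 ≤ k)
    (U : ZkL k → ℝ) (hUnn : ∀ j, 0 ≤ U j) (hUeven : ∀ j, U (-j) = U j) (hU0 : U 0 = 0)
    (v : ℝ) (hv : IsGLB {y : ℝ | ∃ j : ZkL k, j ≠ 0 ∧ y = U j} v) (hvpos : 0 < v)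
    (A : ℝ) (hA : 1 / v < A)
    (hfin : ∃ d : ℕ, 2 ≤ d ∧ Summable fun j : ZkL k =>
      Real.exp (-(A * Real.log d / ((d : ℝ) + 1)) * U j) ^ (((d : ℝ) + 1) / 2)) :
    ∃ C : ℝ, 0 < C ∧ ∃ d₀ : ℕ, 2 ≤ d₀ ∧ ∀ d : ℕ, d₀ ≤ d →
      ∀ β : ℝ, A * Real.log d / ((d : ℝ) + 1) ≤ β →
        ∀ ε : ℝ, 0 < ε →
          del k d (fun j => Real.exp (-β * U j)) +
              gam k d (fun j => Real.exp (-β * U j)) * ε ^ d ≤ ε →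
          2 * d * gam k d (fun j => Real.exp (-β * U j)) * ε ^ (d - 1) +
              2 * d * del k d (fun j => Real.exp (-β * U j)) * ε ^ d < 1 →
          ∀ x : ZkP k → ℝ, memD k d x → norm0 k ((d : ℝ) + 1) x ≤ ε →
            (∀ i : ZkP k, opT k d (fun j => Real.exp (-β * U j)) x i.1 = x i) →
            norm0 k ((d : ℝ) + 1) x ^ (d + 1) ≤ C / d := by
  obtain ⟨C, hC, d₀, hd₀, h⟩ :=
    stmt19_general U hUnn v hvpos (fun j hj => hv.1 ⟨j, hj, rfl⟩) A hA.le hfin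
  exact ⟨C, hC, d₀, hd₀, fun d hd β hβ ε _ _ hε x hx hxε hfix =>
    h d hd β hβ x hx.1 hx.2 (fun i => (hfix i).ge) (mul_pow_le_one_of_contraction
      (ellNorm_nonneg _ _) hxε (ellNorm_nonneg _ _) (ellNorm_nonneg _ _) hε)⟩
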